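/- Let r ≥ 2 be even and let n ≥ 2 be even. The 3-partite 3-graph H consisting of n/2 pairwise disjoint copies of (r/2)·F, where F is the truncated Fano plane, is r-regular, has n vertices in each vertex class, and satisfies ν(H) = n/2. -/

import Mathlib

namespace Tripartite

/-- The degree of a vertex `a` in the first class of a 3-partite 3-multihypergraph,
whose edges are given as a multiset of triples (so parallel edges are allowed). -/
def deg1 {α β γ : Type*} [DecidableEq α] (H : Multiset (α × β × γ)) (a : α) : ℕ :=
  (H.filter fun e => e.1 = a).card

/-- The degree of a vertex `b` in the second class. -/
def deg2 {α β γ : Type*} [DecidableEq β] (H : Multiset (α × β × γ)) (b : β) : ℕ :=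
  (H.filter fun e => e.2.1 = b).card

/-- The degree of a vertex `c` in the third class. -/
def deg3 {α β γ : Type*} [DecidableEq γ] (H : Multiset (α × β × γ)) (c : γ) : ℕ :=
  (H.filter fun e => e.2.2 = c).card

/-- `H` is `r`-regular: every vertex of every class has degree exactly `r`. -/
def IsRegular {α β γ : Type*} [DecidableEq α] [DecidableEq β] [DecidableEq γ]
    (H : Multiset (α × β × γ)) (r : ℕ) : Prop :=
  (∀ a, deg1 H a = r) ∧ (∀ b, deg2 H b = r) ∧ (∀ c, deg3 H c = r)

/-- A matching of `H`: a set of edges of `H` that are pairwise disjoint. -/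
def IsMatching {α β γ : Type*} (H : Multiset (α × β × γ)) (M : Finset (α × β × γ)) : Prop :=
  (∀ e ∈ M, e ∈ H) ∧
  ∀ e ∈ M, ∀ f ∈ M, e ≠ f → e.1 ≠ f.1 ∧ e.2.1 ≠ f.2.1 ∧ e.2.2 ≠ f.2.2

/-- The matching number ν(H): the maximum size of a matching of `H`. -/
noncomputable def matchNum {α β γ : Type*} (H : Multiset (α × β × γ)) : ℕ :=
  sSup {k | ∃ M : Finset (α × β × γ), IsMatching H M ∧ M.card = k}

/-- The edge multiset of the truncated Fano plane `F` on vertices `x1, y1` (first class),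
`x2, y2` (second class), `x3, y3` (third class). -/
def fanoEdges {α β γ : Type*} (x1 y1 : α) (x2 y2 : β) (x3 y3 : γ) :
    Multiset (α × β × γ) :=
  {(x1, x2, x3), (x1, y2, y3), (y1, x2, y3), (y1, y2, x3)}

/-- The six vertices `x1, y1, x2, y2, x3, y3` span a copy of `s • F` in `H`, i.e. a
subhypergraph in which every edge of the truncated Fano plane appears with
multiplicity (at least) `s`. -/
def IsFanoCopy {α β γ : Type*} (H : Multiset (α × β × γ)) (s : ℕ)
    (x1 y1 : α) (x2 y2 : β) (x3 y3 : γ) : Prop :=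
  x1 ≠ y1 ∧ x2 ≠ y2 ∧ x3 ≠ y3 ∧ s • fanoEdges x1 y1 x2 y2 x3 y3 ≤ H

/-- The six vertices `x1, y1, x2, y2, x3, y3` span a connected component of `H` that is a
copy of `s • F`: the multiset of edges of `H` meeting one of these six vertices is exactly
`s` parallel copies of each of the four edges of the truncated Fano plane. -/
def IsFanoComponent {α β γ : Type*} [DecidableEq α] [DecidableEq β] [DecidableEq γ]
    (H : Multiset (α × β × γ)) (s : ℕ)
    (x1 y1 : α) (x2 y2 : β) (x3 y3 : γ) : Prop :=
  x1 ≠ y1 ∧ x2 ≠ y2 ∧ x3 ≠ y3 ∧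
  H.filter (fun e => e.1 = x1 ∨ e.1 = y1 ∨ e.2.1 = x2 ∨ e.2.1 = y2 ∨
      e.2.2 = x3 ∨ e.2.2 = y3)
    = s • fanoEdges x1 y1 x2 y2 x3 y3

/-- The 3-partite 3-graph consisting of `m` pairwise disjoint copies of `s • F`:
each vertex class is `Fin m × Fin 2`, and the `i`-th copy of `s • F` lives on the vertices
`(i, 0), (i, 1)` of each class. -/
def fanoUnion (m s : ℕ) :
    Multiset ((Fin m × Fin 2) × (Fin m × Fin 2) × (Fin m × Fin 2)) :=
  (Finset.univ : Finset (Fin m)).val.bind fun i =>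
    s • fanoEdges (i, 0) (i, 1) (i, 0) (i, 1) (i, 0) (i, 1)

/-!
Degrees, Fano components and the matching number are all computed one part at a time in a
vertex-disjoint union: an edge of the union lies in a single part, so a matching of the union is
the same thing as a choice of a matching in every part, and `ν` is additive. Taking parallel copies
multiplies degrees and leaves `ν` unchanged. This reduces everything to `F` itself, which is
`2`-regular and has `ν(F) = 1` because any two of its four edges meet.
-/

variable {ι α β γ : Type*}

section MatchNum

variable {H : Multiset (α × β × γ)} {M : Finset (α × β × γ)} {s : ℕ}

theorem bddAbove_isMatching_card (H : Multiset (α × β × γ)) :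
    BddAbove {k | ∃ M : Finset (α × β × γ), IsMatching H M ∧ M.card = k} := by
  classical
  refine ⟨H.toFinset.card, ?_⟩
  rintro _ ⟨M, hM, rfl⟩
  exact Finset.card_le_card fun e he => Multiset.mem_toFinset.2 (hM.1 e he)

theorem IsMatching.card_le_matchNum (hM : IsMatching H M) : M.card ≤ matchNum H :=
  le_csSup (bddAbove_isMatching_card H) ⟨M, hM, rfl⟩

theorem isMatching_empty (H : Multiset (α × β × γ)) : IsMatching H ∅ := by
  simp [IsMatching]

theorem exists_isMatching_card_eq_matchNum (H : Multiset (α × β × γ)) :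
    ∃ M, IsMatching H M ∧ M.card = matchNum H :=
  have hne : {k | ∃ M : Finset (α × β × γ), IsMatching H M ∧ M.card = k}.Nonempty :=
    ⟨_, ∅, isMatching_empty H, rfl⟩
  Nat.sSup_mem hne (bddAbove_isMatching_card H)

theorem matchNum_le_iff {k : ℕ} :
    matchNum H ≤ k ↔ ∀ M, IsMatching H M → M.card ≤ k := by
  refine ⟨fun h M hM => hM.card_le_matchNum.trans h, fun h => ?_⟩
  obtain ⟨M, hM, hcard⟩ := exists_isMatching_card_eq_matchNum H
  exact hcard ▸ h M hM

theorem isMatching_nsmul_iff (hs : s ≠ 0) : IsMatching (s • H) M ↔ IsMatching H M := by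
  simp only [IsMatching, Multiset.mem_nsmul_of_ne_zero hs]

theorem matchNum_nsmul (hs : s ≠ 0) : matchNum (s • H) = matchNum H := by
  simp only [matchNum, isMatching_nsmul_iff hs]

/-- A 3-partite 3-graph is intersecting if any two of its edges share a vertex. -/
def IsIntersecting (H : Multiset (α × β × γ)) : Prop :=
  ∀ e ∈ H, ∀ f ∈ H, e.1 = f.1 ∨ e.2.1 = f.2.1 ∨ e.2.2 = f.2.2

theorem IsIntersecting.card_le_one (hH : IsIntersecting H) (hM : IsMatching H M) :
    M.card ≤ 1 := by
  refine Finset.card_le_one.2 fun e he f hf => ?_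
  by_contra hne
  obtain ⟨h1, h2, h3⟩ := hM.2 e he f hf hne
  rcases hH e (hM.1 e he) f (hM.1 f hf) with h | h | h
  exacts [h1 h, h2 h, h3 h]

theorem isMatching_singleton {e : α × β × γ} (he : e ∈ H) : IsMatching H {e} := by
  simp [IsMatching, he]

theorem IsIntersecting.matchNum_eq_one (hH : IsIntersecting H) (hne : H ≠ 0) :
    matchNum H = 1 := by
  obtain ⟨e, he⟩ := Multiset.exists_mem_of_ne_zero hne
  exact le_antisymm (matchNum_le_iff.2 fun _ hM => hH.card_le_one hM)
    (isMatching_singleton he).card_le_matchNum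

end MatchNum

theorem IsRegular.nsmul [DecidableEq α] [DecidableEq β] [DecidableEq γ]
    {H : Multiset (α × β × γ)} {r : ℕ} (hH : IsRegular H r) (s : ℕ) :
    IsRegular (s • H) (s * r) := by
  obtain ⟨h1, h2, h3⟩ := hH
  refine ⟨fun a => ?_, fun b => ?_, fun c => ?_⟩
  · rw [← h1 a, deg1, deg1, Multiset.filter_nsmul, Multiset.card_nsmul]
  · rw [← h2 b, deg2, deg2, Multiset.filter_nsmul, Multiset.card_nsmul]
  · rw [← h3 c, deg3, deg3, Multiset.filter_nsmul, Multiset.card_nsmul]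

section FanoPlane

variable {x1 y1 : α} {x2 y2 : β} {x3 y3 : γ}

theorem isIntersecting_fanoEdges : IsIntersecting (fanoEdges x1 y1 x2 y2 x3 y3) := by
  simp [IsIntersecting, fanoEdges]

theorem matchNum_fanoEdges : matchNum (fanoEdges x1 y1 x2 y2 x3 y3) = 1 :=
  isIntersecting_fanoEdges.matchNum_eq_one (by simp [fanoEdges])

variable [DecidableEq α] [DecidableEq β] [DecidableEq γ]

theorem isRegular_fanoEdges (h1 : x1 ≠ y1) (h2 : x2 ≠ y2) (h3 : x3 ≠ y3)
    (hα : ∀ a, a = x1 ∨ a = y1) (hβ : ∀ b, b = x2 ∨ b = y2) (hγ : ∀ c, c = x3 ∨ c = y3) :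
    IsRegular (fanoEdges x1 y1 x2 y2 x3 y3) 2 := by
  refine ⟨fun a => ?_, fun b => ?_, fun c => ?_⟩
  · rcases hα a with rfl | rfl <;>
      simp [deg1, fanoEdges, Multiset.filter_singleton, h1, h1.symm]
  · rcases hβ b with rfl | rfl <;>
      simp [deg2, fanoEdges, Multiset.filter_singleton, h2, h2.symm]
  · rcases hγ c with rfl | rfl <;>
      simp [deg3, fanoEdges, Multiset.filter_singleton, h3, h3.symm]

theorem isFanoComponent_nsmul_fanoEdges (h1 : x1 ≠ y1) (h2 : x2 ≠ y2) (h3 : x3 ≠ y3) (s : ℕ) :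
    IsFanoComponent (s • fanoEdges x1 y1 x2 y2 x3 y3) s x1 y1 x2 y2 x3 y3 := by
  refine ⟨h1, h2, h3, ?_⟩
  rw [Multiset.filter_nsmul, Multiset.filter_eq_self.2]
  simp [fanoEdges]

end FanoPlane

section DisjointUnion

/-- The inclusion of the edges of the `i`-th part into a vertex-disjoint union of 3-partite
3-graphs indexed by `ι`: the vertex `v` of the `i`-th part becomes `(i, v)`, in every class. -/
def edgeIncl (i : ι) : α × β × γ ↪ (ι × α) × (ι × β) × (ι × γ) where
  toFun e := ((i, e.1), (i, e.2.1), (i, e.2.2))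
  inj' e f h := by simpa [Prod.ext_iff] using h

theorem edgeIncl_apply (i : ι) (e : α × β × γ) :
    edgeIncl i e = ((i, e.1), (i, e.2.1), (i, e.2.2)) :=
  rfl

theorem map_edgeIncl_nsmul_fanoEdges (i : ι) (s : ℕ) (x1 y1 : α) (x2 y2 : β) (x3 y3 : γ) :
    (s • fanoEdges x1 y1 x2 y2 x3 y3).map (edgeIncl i) =
      s • fanoEdges (i, x1) (i, y1) (i, x2) (i, y2) (i, x3) (i, y3) := by
  rw [Multiset.map_nsmul]
  rfl

theorem pairwiseDisjoint_map_edgeIncl (s : Set ι) (M : ι → Finset (α × β × γ)) :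
    s.PairwiseDisjoint fun i => (M i).map (edgeIncl i) := by
  intro i _ j _ hij
  simp only [Function.onFun, Finset.disjoint_left, Finset.mem_map]
  rintro _ ⟨e, -, rfl⟩ ⟨f, -, hfe⟩
  exact hij (congrArg (fun e => e.1.1) hfe).symm

variable [Fintype ι]

/-- The vertex-disjoint union of the 3-partite 3-graphs `H i`. All parts have the same vertex
types, and `ι × α`, `ι × β`, `ι × γ` are the vertex classes of the union. -/
def disjointUnion (H : ι → Multiset (α × β × γ)) : Multiset ((ι × α) × (ι × β) × (ι × γ)) :=
  Finset.univ.val.bind fun i => (H i).map (edgeIncl i)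

variable {H : ι → Multiset (α × β × γ)}

theorem mem_disjointUnion {e : (ι × α) × (ι × β) × (ι × γ)} :
    e ∈ disjointUnion H ↔ ∃ i, ∃ f ∈ H i, edgeIncl i f = e := by
  simp only [disjointUnion, Multiset.mem_bind, Finset.mem_val, Finset.mem_univ, true_and,
    Multiset.mem_map]

theorem edgeIncl_mem_disjointUnion {i : ι} {e : α × β × γ} :
    edgeIncl i e ∈ disjointUnion H ↔ e ∈ H i := by
  refine mem_disjointUnion.trans ⟨?_, fun he => ⟨i, e, he, rfl⟩⟩
  rintro ⟨j, f, hf, hfe⟩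
  obtain rfl : j = i := congrArg (fun e => e.1.1) hfe
  rwa [← (edgeIncl j).injective hfe]

theorem filter_disjointUnion (p : (ι × α) × (ι × β) × (ι × γ) → Prop) [DecidablePred p] {i : ι}
    (hp : ∀ j e, p (edgeIncl j e) → j = i) :
    (disjointUnion H).filter p = ((H i).filter fun e => p (edgeIncl i e)).map (edgeIncl i) := by
  have hsum : (disjointUnion H).filter p = ∑ j, ((H j).map (edgeIncl j)).filter p := by
    rw [disjointUnion, Multiset.filter_bind]
    rfl
  rw [hsum, Finset.sum_eq_single i _ (by simp), Multiset.filter_map]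
  · rfl
  · intro j _ hj
    refine Multiset.filter_eq_nil.2 fun e he hpe => ?_
    obtain ⟨f, -, rfl⟩ := Multiset.mem_map.1 he
    exact hj (hp j f hpe)

section Regular

variable [DecidableEq ι]

theorem deg1_disjointUnion [DecidableEq α] (i : ι) (a : α) :
    deg1 (disjointUnion H) (i, a) = deg1 (H i) a := by
  rw [deg1, deg1, filter_disjointUnion (fun e => e.1 = (i, a)) fun j e h => congrArg Prod.fst h,
    Multiset.card_map]
  simp [edgeIncl_apply]

theorem deg2_disjointUnion [DecidableEq β] (i : ι) (b : β) :
    deg2 (disjointUnion H) (i, b) = deg2 (H i) b := by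
  rw [deg2, deg2, filter_disjointUnion (fun e => e.2.1 = (i, b)) fun j e h => congrArg Prod.fst h,
    Multiset.card_map]
  simp [edgeIncl_apply]

theorem deg3_disjointUnion [DecidableEq γ] (i : ι) (c : γ) :
    deg3 (disjointUnion H) (i, c) = deg3 (H i) c := by
  rw [deg3, deg3, filter_disjointUnion (fun e => e.2.2 = (i, c)) fun j e h => congrArg Prod.fst h,
    Multiset.card_map]
  simp [edgeIncl_apply]

theorem IsRegular.disjointUnion [DecidableEq α] [DecidableEq β] [DecidableEq γ] {r : ℕ}
    (hH : ∀ i, IsRegular (H i) r) :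
    IsRegular (disjointUnion H) r :=
  ⟨fun ⟨i, a⟩ => (deg1_disjointUnion i a).trans ((hH i).1 a),
    fun ⟨i, b⟩ => (deg2_disjointUnion i b).trans ((hH i).2.1 b),
    fun ⟨i, c⟩ => (deg3_disjointUnion i c).trans ((hH i).2.2 c)⟩

end Regular

theorem IsFanoComponent.disjointUnion
    [DecidableEq ι] [DecidableEq α] [DecidableEq β] [DecidableEq γ]
    {i : ι} {s : ℕ} {x1 y1 : α} {x2 y2 : β} {x3 y3 : γ}
    (h : IsFanoComponent (H i) s x1 y1 x2 y2 x3 y3) :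
    IsFanoComponent (disjointUnion H) s (i, x1) (i, y1) (i, x2) (i, y2) (i, x3) (i, y3) := by
  obtain ⟨h1, h2, h3, hfilter⟩ := h
  refine ⟨by simpa using h1, by simpa using h2, by simpa using h3, ?_⟩
  rw [filter_disjointUnion (i := i) _ (by simp only [edgeIncl_apply, Prod.mk.injEq]; tauto),
    ← map_edgeIncl_nsmul_fanoEdges, ← hfilter]
  simp only [edgeIncl_apply, Prod.mk.injEq, true_and]

/-- The set of edges of a vertex-disjoint union obtained by choosing the set `M i` of edges in
the `i`-th part; the counterpart of `disjointUnion` for simple edge sets, such as matchings. -/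
def edgeUnion (M : ι → Finset (α × β × γ)) : Finset ((ι × α) × (ι × β) × (ι × γ)) :=
  Finset.univ.disjiUnion (fun i => (M i).map (edgeIncl i)) (pairwiseDisjoint_map_edgeIncl _ M)

theorem mem_edgeUnion {M : ι → Finset (α × β × γ)} {e : (ι × α) × (ι × β) × (ι × γ)} :
    e ∈ edgeUnion M ↔ ∃ i, ∃ f ∈ M i, edgeIncl i f = e := by
  simp only [edgeUnion, Finset.mem_disjiUnion, Finset.mem_univ, true_and, Finset.mem_map]

theorem card_edgeUnion (M : ι → Finset (α × β × γ)) : (edgeUnion M).card = ∑ i, (M i).card := by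
  simp only [edgeUnion, Finset.card_disjiUnion, Finset.card_map]

theorem IsMatching.edgeUnion {M : ι → Finset (α × β × γ)} (hM : ∀ i, IsMatching (H i) (M i)) :
    IsMatching (disjointUnion H) (edgeUnion M) := by
  simp only [IsMatching, mem_edgeUnion]
  constructor
  · rintro _ ⟨i, e, he, rfl⟩
    exact edgeIncl_mem_disjointUnion.2 ((hM i).1 e he)
  · rintro _ ⟨i, e, he, rfl⟩ _ ⟨j, f, hf, rfl⟩ hne
    by_cases hij : i = j
    · subst hij
      simpa [edgeIncl_apply] using (hM i).2 e he f hf fun hef => hne (congrArg _ hef)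
    · simp [edgeIncl_apply, hij]

variable {M : Finset ((ι × α) × (ι × β) × (ι × γ))}

theorem IsMatching.preimage_edgeIncl (hM : IsMatching (disjointUnion H) M) (i : ι) :
    IsMatching (H i) (M.preimage (edgeIncl i) (edgeIncl i).injective.injOn) := by
  simp only [IsMatching, Finset.mem_preimage]
  refine ⟨fun e he => edgeIncl_mem_disjointUnion.1 (hM.1 _ he), fun e he f hf hne => ?_⟩
  simpa [edgeIncl_apply] using hM.2 _ he _ hf ((edgeIncl i).injective.ne hne)

theorem IsMatching.subset_edgeUnion_preimage (hM : IsMatching (disjointUnion H) M) :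
    M ⊆ Tripartite.edgeUnion fun i =>
      M.preimage (edgeIncl i) (edgeIncl i).injective.injOn := by
  intro e he
  obtain ⟨i, f, -, rfl⟩ := mem_disjointUnion.1 (hM.1 e he)
  exact mem_edgeUnion.2 ⟨i, f, Finset.mem_preimage.2 he, rfl⟩

theorem matchNum_disjointUnion (H : ι → Multiset (α × β × γ)) :
    matchNum (disjointUnion H) = ∑ i, matchNum (H i) := by
  refine le_antisymm (matchNum_le_iff.2 fun M hM => ?_) ?_
  · let N i := M.preimage (edgeIncl i) (edgeIncl i).injective.injOn
    calc
      M.card ≤ (edgeUnion N).card := Finset.card_le_card hM.subset_edgeUnion_preimage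
      _ = ∑ i, (N i).card := card_edgeUnion N
      _ ≤ ∑ i, matchNum (H i) :=
        Finset.sum_le_sum fun i _ => (hM.preimage_edgeIncl i).card_le_matchNum
  · choose M hM hcard using fun i => exists_isMatching_card_eq_matchNum (H i)
    calc
      ∑ i, matchNum (H i) = (edgeUnion M).card := by simp only [card_edgeUnion, hcard]
      _ ≤ matchNum (disjointUnion H) := (IsMatching.edgeUnion hM).card_le_matchNum

end DisjointUnion

theorem fanoUnion_eq_disjointUnion (m s : ℕ) :
    fanoUnion m s = disjointUnion fun _ : Fin m => s • fanoEdges (0 : Fin 2) 1 0 1 0 1 := by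
  simp only [disjointUnion, map_edgeIncl_nsmul_fanoEdges]
  rfl

theorem isRegular_fanoUnion (m s : ℕ) : IsRegular (fanoUnion m s) (s * 2) := by
  have hF : IsRegular (fanoEdges (0 : Fin 2) 1 (0 : Fin 2) 1 (0 : Fin 2) 1) 2 :=
    isRegular_fanoEdges zero_ne_one zero_ne_one zero_ne_one
      (by decide) (by decide) (by decide)
  rw [fanoUnion_eq_disjointUnion]
  exact IsRegular.disjointUnion fun _ => hF.nsmul s

theorem isFanoComponent_fanoUnion {m : ℕ} (s : ℕ) (i : Fin m) :
    IsFanoComponent (fanoUnion m s) s (i, 0) (i, 1) (i, 0) (i, 1) (i, 0) (i, 1) := by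
  rw [fanoUnion_eq_disjointUnion]
  have h01 : (0 : Fin 2) ≠ 1 := zero_ne_one
  exact IsFanoComponent.disjointUnion (H := fun _ => s • fanoEdges 0 1 0 1 0 1)
    (isFanoComponent_nsmul_fanoEdges h01 h01 h01 s)

theorem matchNum_fanoUnion (m : ℕ) {s : ℕ} (hs : s ≠ 0) : matchNum (fanoUnion m s) = m := by
  simp [fanoUnion_eq_disjointUnion, matchNum_disjointUnion, matchNum_nsmul hs,
    matchNum_fanoEdges]

/-- For even `r ≥ 2` and even `n ≥ 2`, the 3-partite 3-graph consisting of `n/2` pairwise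
disjoint copies of `(r/2) • F` is `r`-regular, has `n` vertices in each vertex class, each
of its `n/2` copies of `(r/2) • F` is a connected component, and its matching number is
exactly `n/2`. -/
theorem stmt12 (r n : ℕ) (hr : 2 ≤ r) (hn : 2 ≤ n) (hre : Even r) (hne : Even n) :
    IsRegular (fanoUnion (n / 2) (r / 2)) r ∧
    Fintype.card (Fin (n / 2) × Fin 2) = n ∧
    (∀ i : Fin (n / 2), IsFanoComponent (fanoUnion (n / 2) (r / 2)) (r / 2)
      (i, 0) (i, 1) (i, 0) (i, 1) (i, 0) (i, 1)) ∧
    matchNum (fanoUnion (n / 2) (r / 2)) = n / 2 := by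
  have hr2 : r / 2 * 2 = r := Nat.div_mul_cancel hre.two_dvd
  have hn2 : n / 2 * 2 = n := Nat.div_mul_cancel hne.two_dvd
  have hs : r / 2 ≠ 0 := by omega
  refine ⟨?_, ?_, isFanoComponent_fanoUnion (r / 2), matchNum_fanoUnion (n / 2) hs⟩
  · simpa only [hr2] using isRegular_fanoUnion (n / 2) (r / 2)
  · rw [Fintype.card_prod, Fintype.card_fin, Fintype.card_fin, hn2]

end Tripartite
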